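/- Let n ≥ 2 be an integer, λ ≤ 0, and 0 < ε ≤ 1/√π. Let f be the maximal solution of the profile ODE f''(r)/(1 + f'(r)²) = (r − (n−1)/r)·f'(r) − f(r) − λ·√(1 + f'(r)²) on [0, r_*) (C¹ on [0, r_*), C² on (0, r_*)) with f(0) = −λ + ε and f'(0) = 0, where r_* is the blow-up radius (lim_{r → r_*⁻} f'(r) = −∞). Then r_* > √(log(1/(√π·ε))). -/

import Mathlib

open Real Set Filter

/-- The profile ODE (2.7): `f''/(1+f'²) = (r - (n-1)/r) f' - f - λ √(1+f'²)` at the point `r`. -/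
def ProfileEq (n : ℕ) (lam : ℝ) (f : ℝ → ℝ) (r : ℝ) : Prop :=
  deriv (deriv f) r / (1 + (deriv f r) ^ 2) =
    (r - ((n : ℝ) - 1) / r) * deriv f r - f r - lam * Real.sqrt (1 + (deriv f r) ^ 2)

lemma sig_deriv (u : ℝ → ℝ) (v r : ℝ) (h : HasDerivAt u v r) :
    HasDerivAt (fun x => -u x / Real.sqrt (1 + u x ^ 2)) (-v / Real.sqrt (1 + u r ^ 2) ^ 3) r := by
  have hp : 0 < 1 + u r ^ 2 := by positivity
  have hq : 0 < Real.sqrt (1 + u r ^ 2) := Real.sqrt_pos.mpr hp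
  have hs : Real.sqrt (1 + u r ^ 2) ^ 2 = 1 + u r ^ 2 := Real.sq_sqrt hp.le
  have h1 : HasDerivAt (fun x => 1 + u x ^ 2) (2 * u r * v) r := by
    have := (h.pow 2).const_add 1
    simpa using this
  have h2 := (h.neg).div (h1.sqrt hp.ne') hq.ne'
  refine h2.congr_deriv ?_
  simp only [Pi.neg_apply]
  generalize Real.sqrt (1 + u r ^ 2) = q at *
  field_simp
  linear_combination (-v) * hs

lemma neg_deriv_left (G : ℝ → ℝ) (d a z : ℝ) (haz : a < z) (h : HasDerivAt G d z) (hd : d < 0) :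
    ∃ x ∈ Ioo a z, G z < G x := by
  have h1 := (hasDerivAt_iff_tendsto_slope.mp h).mono_left
    (nhdsWithin_mono z (show Iio z ⊆ {z}ᶜ from fun x hx => ne_of_lt hx))
  have h2 := (h1.eventually (gt_mem_nhds hd)).and (Ioo_mem_nhdsLT haz)
  obtain ⟨x, hx1, hx2⟩ := h2.exists
  refine ⟨x, hx2, ?_⟩
  rw [slope_def_field] at hx1
  have : x - z < 0 := by linarith [hx2.2]
  rcases div_neg_iff.mp hx1 with h | h <;> linarith [h.1, h.2]

lemma core (m : ℕ) (hm : 1 ≤ m) (lam ε R : ℝ) (hlam : lam ≤ 0) (hε : 0 < ε) (hR : 0 < R)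
    (f u G : ℝ → ℝ) (hfc : ContinuousOn f (Ico 0 R))
    (hG : ∀ r, G r = (r - (m : ℝ) / r) * u r - f r - lam * Real.sqrt (1 + u r ^ 2))
    (hf : ∀ r ∈ Ioo 0 R, HasDerivAt f (u r) r)
    (hu : ∀ r ∈ Ioo 0 R, HasDerivAt u ((1 + u r ^ 2) * G r) r)
    (hf0 : f 0 = -lam + ε) (hu0 : u 0 = 0) :
    ∀ r ∈ Ioo 0 R, -u r / Real.sqrt (1 + u r ^ 2) ≤ ε * r * Real.exp (r ^ 2 / 2) := by
  have hm' : (1 : ℝ) ≤ m := by exact_mod_cast hm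
  set Q : ℝ → ℝ := fun r => Real.sqrt (1 + u r ^ 2) with hQ
  set σ : ℝ → ℝ := fun r => -u r / Q r with hσ
  have hQsq : ∀ r, Q r ^ 2 = 1 + u r ^ 2 := fun r => Real.sq_sqrt (by positivity)
  have hQpos : ∀ r, 0 < Q r := fun r => Real.sqrt_pos.mpr (by positivity)
  have hQ1 : ∀ r, 1 ≤ Q r := fun r => by nlinarith [hQsq r, hQpos r, sq_nonneg (u r)]
  have hσ1 : ∀ r, |σ r| ≤ 1 := by
    intro r
    rw [hσ]
    simp only [abs_div, abs_neg, abs_of_pos (hQpos r)]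
    rw [div_le_one (hQpos r)]
    exact abs_le_of_sq_le_sq (by rw [hQsq]; linarith) (hQpos r).le
  have hσ0 : σ 0 = 0 := by simp [hσ, hu0]
  have hσG : ∀ r ∈ Ioo 0 R, HasDerivAt σ (-G r / Q r) r := by
    intro r hr
    refine (sig_deriv u _ r (hu r hr)).congr_deriv ?_
    change -((1 + u r ^ 2) * G r) / Q r ^ 3 = _
    rw [← hQsq]
    have := hQpos r
    field_simp
  have hσd : ∀ r ∈ Ioo 0 R, HasDerivAt σ ((r - m / r) * σ r + (f r / Q r + lam)) r := by
    intro r hr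
    refine (hσG r hr).congr_deriv ?_
    rw [hG r]
    change -(_ - lam * Q r) / Q r = (r - m / r) * (-u r / Q r) + _
    have := hQpos r
    field_simp
    ring
  have hexp : ∀ r : ℝ, HasDerivAt (fun x : ℝ => Real.exp (-(x ^ 2 / 2)))
      (-r * Real.exp (-(r ^ 2 / 2))) r := by
    intro r
    have h1 : HasDerivAt (fun x : ℝ => -(x ^ 2 / 2)) (-r) r := by
      have := (((hasDerivAt_id r).pow 2).div_const 2).neg
      refine this.congr_deriv ?_
      simp
    exact h1.exp.congr_deriv (by ring)
  have hFd : ∀ r ∈ Ioo 0 R, HasDerivAt (fun x => x ^ m * Real.exp (-(x ^ 2 / 2)) * σ x)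
      (r ^ m * Real.exp (-(r ^ 2 / 2)) * (f r / Q r + lam)) r := by
    intro r hr
    refine (((hasDerivAt_pow m r).mul (hexp r)).mul (hσd r hr)).congr_deriv ?_
    have hr0 : r ≠ 0 := hr.1.ne'
    obtain ⟨k, rfl⟩ : ∃ k, m = k + 1 := ⟨m - 1, by omega⟩
    simp only [Nat.add_sub_cancel, Pi.mul_apply]
    field_simp
    ring
  have hmvt : ∀ r ∈ Ioo 0 R, ∃ c ∈ Ioo 0 r,
      r ^ m * Real.exp (-(r ^ 2 / 2)) * σ r =
        r * (c ^ m * Real.exp (-(c ^ 2 / 2)) * (f c / Q c + lam)) := by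
    intro r hr
    have hc : ContinuousOn (fun x => x ^ m * Real.exp (-(x ^ 2 / 2)) * σ x) (Icc 0 r) := by
      intro x hx
      rcases hx.1.eq_or_lt with h | h
      · subst h
        apply ContinuousAt.continuousWithinAt
        have h0 : (0 : ℝ) ^ m = 0 := zero_pow (by omega)
        unfold ContinuousAt
        simp only [h0, zero_mul]
        refine squeeze_zero_norm' (a := fun x : ℝ => |x ^ m * Real.exp (-(x ^ 2 / 2))|) ?_ ?_
        · refine Eventually.of_forall fun x => ?_
          rw [Real.norm_eq_abs, abs_mul]
          exact mul_le_of_le_one_right (abs_nonneg _) (hσ1 x)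
        · have : Continuous (fun x : ℝ => |x ^ m * Real.exp (-(x ^ 2 / 2))|) := by fun_prop
          have := this.tendsto 0
          simpa [h0] using this
      · exact (hFd x ⟨h, hx.2.trans_lt hr.2⟩).continuousAt.continuousWithinAt
    obtain ⟨c, hc1, hc2⟩ := exists_hasDerivAt_eq_slope _ _ hr.1 hc
      (fun x hx => hFd x ⟨hx.1, hx.2.trans hr.2⟩)
    refine ⟨c, hc1, ?_⟩
    have hr0 : r ≠ 0 := hr.1.ne'
    rw [hc2]
    simp only [hσ0]
    field_simp
    ring
  -- bound near zero
  obtain ⟨M, hM⟩ := (isCompact_Icc (a := (0 : ℝ)) (b := R / 2)).exists_bound_of_continuousOn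
    (hfc.mono (fun x hx => ⟨hx.1, by linarith [hx.2]⟩))
  have hM0 : 0 ≤ M := (norm_nonneg _).trans (hM 0 ⟨le_rfl, by linarith⟩)
  have hσb : ∀ r ∈ Ioo 0 (R / 2), |σ r| ≤ (M + |lam|) * r * Real.exp (r ^ 2 / 2) := by
    intro r hr
    obtain ⟨c, hc, h⟩ := hmvt r ⟨hr.1, by linarith [hr.2]⟩
    have hb : |f c / Q c + lam| ≤ M + |lam| := by
      refine (abs_add_le _ _).trans (add_le_add_left ?_ _)
      rw [abs_div, abs_of_pos (hQpos c)]
      exact (div_le_self (abs_nonneg _) (hQ1 c)).trans (hM c ⟨hc.1.le, by linarith [hc.2, hr.2]⟩)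
    have hE : Real.exp (-(r ^ 2 / 2)) * Real.exp (r ^ 2 / 2) = 1 := by
      rw [← Real.exp_add]; simp
    have hrm : 0 < r ^ m := pow_pos hr.1 m
    have hcm : c ^ m ≤ r ^ m := pow_le_pow_left₀ hc.1.le hc.2.le m
    have hcm0 : 0 < c ^ m := pow_pos hc.1 m
    have hec : Real.exp (-(c ^ 2 / 2)) ≤ 1 := Real.exp_le_one_iff.mpr (by nlinarith [sq_nonneg c])
    have h2 : r ^ m * Real.exp (-(r ^ 2 / 2)) * |σ r| ≤ r * (r ^ m * (M + |lam|)) := by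
      have := congrArg abs h
      rw [abs_mul, abs_mul, abs_mul r, abs_mul (c ^ m * _), abs_mul (c ^ m), abs_of_pos hr.1,
        abs_of_pos hrm, abs_of_pos hcm0, abs_of_pos (Real.exp_pos _), abs_of_pos (Real.exp_pos _)]
        at this
      rw [this]
      have h3 : c ^ m * Real.exp (-(c ^ 2 / 2)) ≤ r ^ m :=
        (mul_le_of_le_one_right hcm0.le hec).trans hcm
      have := hr.1
      gcongr
    have h4 : Real.exp (-(r ^ 2 / 2)) * |σ r| ≤ r * (M + |lam|) := by
      refine le_of_mul_le_mul_left ?_ hrm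
      linarith
    calc |σ r| = (Real.exp (-(r ^ 2 / 2)) * |σ r|) * Real.exp (r ^ 2 / 2) := by
          linear_combination (-|σ r|) * hE
      _ ≤ (r * (M + |lam|)) * Real.exp (r ^ 2 / 2) := by gcongr
      _ = _ := by ring
  have hσt : Tendsto σ (nhdsWithin 0 (Ioi 0)) (nhds 0) := by
    refine squeeze_zero_norm' (a := fun r : ℝ => (M + |lam|) * r * Real.exp (r ^ 2 / 2)) ?_ ?_
    · filter_upwards [Ioo_mem_nhdsGT (show (0 : ℝ) < R / 2 by linarith)] with r hr
      exact hσb r hr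
    · have : Continuous (fun r : ℝ => (M + |lam|) * r * Real.exp (r ^ 2 / 2)) := by fun_prop
      have := this.tendsto 0
      simp only [mul_zero, zero_mul] at this
      exact this.mono_left nhdsWithin_le_nhds
  have hσc : ∀ r ∈ Ioo 0 R, ContinuousOn σ (Icc 0 r) := by
    intro r hr x hx
    rcases hx.1.eq_or_lt with h | h
    · subst h
      have : ContinuousWithinAt σ (Ioi 0) 0 := by
        unfold ContinuousWithinAt; rw [hσ0]; exact hσt
      exact (continuousWithinAt_Ioi_iff_Ici.mp this).mono Icc_subset_Ici_self
    · exact (hσd x ⟨h, hx.2.trans_lt hr.2⟩).continuousAt.continuousWithinAt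
  have hQinv : ∀ r, 1 / Q r = Real.sqrt (1 - σ r ^ 2) := by
    intro r
    symm
    rw [Real.sqrt_eq_iff_mul_self_eq_of_pos (by have := hQpos r; positivity)]
    have := hQpos r
    simp only [hσ]
    field_simp
    linear_combination -hQsq r
  have hpos : ∀ᶠ r in nhdsWithin 0 (Ioi 0), 0 < f r / Q r + lam := by
    have h1 : Tendsto f (nhdsWithin 0 (Ioi 0)) (nhds (-lam + ε)) := by
      rw [← hf0]
      have h := hfc 0 ⟨le_rfl, hR⟩
      have h' : ContinuousWithinAt f (Ioo 0 R) 0 := h.mono Ioo_subset_Ico_self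
      unfold ContinuousWithinAt at h'
      rwa [nhdsWithin_Ioo_eq_nhdsGT hR] at h'
    have h2 : Tendsto (fun r => Real.sqrt (1 - σ r ^ 2)) (nhdsWithin 0 (Ioi 0)) (nhds 1) := by
      have := ((hσt.pow 2).const_sub 1).sqrt
      simpa using this
    have h3 := (h1.mul h2).add_const lam
    have h4 : (-lam + ε) * 1 + lam = ε := by ring
    rw [h4] at h3
    filter_upwards [h3.eventually (lt_mem_nhds hε)] with r hr
    rw [← hQinv] at hr
    simpa [div_eq_mul_inv] using hr
  obtain ⟨δ, hδ0, hδ⟩ : ∃ δ, 0 < δ ∧ ∀ r ∈ Ioo 0 δ, r < R ∧ 0 < f r / Q r + lam := by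
    have := hpos.and (Ioo_mem_nhdsGT hR)
    obtain ⟨δ, h1, h2⟩ := mem_nhdsGT_iff_exists_Ioo_subset.mp this
    exact ⟨δ, h1, fun r hr => ⟨(h2 hr).2.2, (h2 hr).1⟩⟩
  have hσp : ∀ r ∈ Ioo 0 δ, 0 < σ r := by
    intro r hr
    obtain ⟨c, hc, h⟩ := hmvt r ⟨hr.1, (hδ r hr).1⟩
    have h1 := (hδ c ⟨hc.1, hc.2.trans hr.2⟩).2
    have h2 : 0 < r * (c ^ m * Real.exp (-(c ^ 2 / 2)) * (f c / Q c + lam)) := by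
      have := hc.1
      have := hr.1
      positivity
    rw [← h] at h2
    have h3 : 0 < r ^ m * Real.exp (-(r ^ 2 / 2)) := by
      have := hr.1
      positivity
    exact (pos_iff_pos_of_mul_pos h2).mp h3
  have hun : ∀ r, 0 < σ r → u r < 0 := by
    intro r h
    have := (div_pos_iff_of_pos_right (hQpos r)).mp h
    linarith
  have hune : ∀ r ∈ Ioo 0 R, u r < 0 := by
    intro r hr
    set t := min δ r / 2 with ht
    have hmin : 0 < min δ r := lt_min hδ0 hr.1
    have ht0 : 0 < t := by linarith
    have htδ : t < δ := by linarith [min_le_left δ r]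
    have htr : t < r := by linarith [min_le_right δ r]
    obtain ⟨c, hc, hc2⟩ := exists_hasDerivAt_eq_slope _ _ ht0 (hσc t ⟨ht0, htr.trans hr.2⟩)
      (fun x hx => hσG x ⟨hx.1, hx.2.trans (htr.trans hr.2)⟩)
    have hcR : c < R := hc.2.trans (htr.trans hr.2)
    have hGc : G c < 0 := by
      have : 0 < -G c / Q c := by
        rw [hc2, hσ0]
        have := hσp t ⟨ht0, htδ⟩
        apply div_pos <;> linarith
      have := (div_pos_iff_of_pos_right (hQpos c)).mp this
      linarith
    have huc : u c < 0 := hun c (hσp c ⟨hc.1, hc.2.trans htδ⟩)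
    have hGd : ∀ x ∈ Ioo 0 R, HasDerivAt G (((1 + m / x ^ 2) * u x + (x - m / x) * ((1 + u x ^ 2) * G x))
        - u x - lam * (u x * ((1 + u x ^ 2) * G x) / Q x)) x := by
      intro x hx
      have hx0 : x ≠ 0 := hx.1.ne'
      have e : G = fun r => (r - (m : ℝ) / r) * u r - f r - lam * Real.sqrt (1 + u r ^ 2) :=
        funext hG
      have h1 : HasDerivAt (fun r : ℝ => r - (m : ℝ) / r) (1 + m / x ^ 2) x := by
        have := (hasDerivAt_id x).sub ((hasDerivAt_const x (m : ℝ)).div (hasDerivAt_id x) hx0)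
        refine this.congr_deriv ?_
        simp
        ring
      have h2 : HasDerivAt (fun r => Real.sqrt (1 + u r ^ 2))
          (u x * ((1 + u x ^ 2) * G x) / Q x) x := by
        have h := ((hu x hx).pow 2).const_add 1
        have h' := h.sqrt (by simp only [Pi.pow_apply]; positivity)
        refine h'.congr_deriv ?_
        have := hQpos x
        simp only [hQ, Pi.pow_apply] at this ⊢
        field_simp
        simp
        try ring
      have := ((h1.mul (hu x hx)).sub (hf x hx)).sub (h2.const_mul lam)
      refine HasDerivAt.congr_of_eventuallyEq this (Eventually.of_forall fun y => ?_)
      rw [hG y]; rfl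
    have hGcont : ContinuousOn G (Icc c r) := fun x hx =>
      (hGd x ⟨hc.1.trans_le hx.1, hx.2.trans_lt hr.2⟩).continuousAt.continuousWithinAt
    have hanti : ∀ z ∈ Icc c r, (∀ x ∈ Ico c z, G x < 0) → u z ≤ u c := by
      intro z hz h
      have : AntitoneOn u (Icc c z) := by
        apply antitoneOn_of_hasDerivWithinAt_nonpos (f' := fun x => (1 + u x ^ 2) * G x)
          (convex_Icc c z)
        · exact fun x hx => (hu x ⟨hc.1.trans_le hx.1, (hx.2.trans hz.2).trans_lt hr.2⟩).continuousAt.continuousWithinAt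
        · intro x hx
          rw [interior_Icc] at hx
          exact (hu x ⟨hc.1.trans hx.1, (hx.2.trans_le hz.2).trans hr.2⟩).hasDerivWithinAt
        · intro x hx
          rw [interior_Icc] at hx
          exact mul_nonpos_of_nonneg_of_nonpos (by positivity) (h x ⟨hx.1.le, hx.2⟩).le
      exact this ⟨le_rfl, hz.1⟩ ⟨hz.1, le_rfl⟩ hz.1
    have hcr : c < r := hc.2.trans htr
    have hGneg : ∀ x ∈ Icc c r, G x < 0 := by
      by_contra hcon
      push Not at hcon
      obtain ⟨y, hy, hGy⟩ := hcon
      have hcpt : IsCompact (Icc c r ∩ G ⁻¹' Ici 0) :=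
        isCompact_Icc.of_isClosed_subset
          (hGcont.preimage_isClosed_of_isClosed isClosed_Icc isClosed_Ici) inter_subset_left
      obtain ⟨z, ⟨hz1, hz2⟩, hz3⟩ := hcpt.exists_isLeast ⟨y, hy, hGy⟩
      have hz2' : 0 ≤ G z := hz2
      have hbefore : ∀ x ∈ Ico c z, G x < 0 := by
        intro x hx
        by_contra hh
        have := hz3 ⟨⟨hx.1, hx.2.le.trans hz1.2⟩, not_lt.mp hh⟩
        exact absurd hx.2 (not_lt.mpr this)
      obtain ⟨x, hx, hGx⟩ := intermediate_value_Icc hz1.1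
        (hGcont.mono (Icc_subset_Icc_right hz1.2)) ⟨hGc.le, hz2'⟩
      have hzx : z ≤ x := hz3 ⟨⟨hx.1, hx.2.trans hz1.2⟩, hGx.ge⟩
      have hxz : x = z := le_antisymm hx.2 hzx
      subst hxz
      have hcx : c < x := lt_of_le_of_ne hx.1 (by rintro rfl; linarith)
      have hux : u x < 0 := (hanti x hz1 hbefore).trans_lt huc
      have hx0 : 0 < x := hc.1.trans hcx
      have hd := hGd x ⟨hx0, hz1.2.trans_lt hr.2⟩
      rw [hGx] at hd
      obtain ⟨w, hw, hGw⟩ := neg_deriv_left G _ c x hcx hd (by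
        have : 0 < (m : ℝ) / x ^ 2 := by positivity
        have := mul_neg_of_pos_of_neg this hux
        simp only [mul_zero, zero_div]
        linarith)
      have := hbefore w ⟨hw.1.le, hw.2⟩
      linarith
    exact (hanti r ⟨hcr.le, le_rfl⟩ (fun x hx => hGneg x ⟨hx.1, hx.2.le⟩)).trans_lt huc
  have hfle : ∀ r ∈ Ioo 0 R, f r ≤ -lam + ε := by
    intro r hr
    rw [← hf0]
    have : AntitoneOn f (Icc 0 r) := by
      apply antitoneOn_of_hasDerivWithinAt_nonpos (f' := u) (convex_Icc 0 r)
      · exact hfc.mono fun x hx => ⟨hx.1, hx.2.trans_lt hr.2⟩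
      · intro x hx
        rw [interior_Icc] at hx
        exact (hf x ⟨hx.1, hx.2.trans hr.2⟩).hasDerivWithinAt
      · intro x hx
        rw [interior_Icc] at hx
        exact (hune x ⟨hx.1, hx.2.trans hr.2⟩).le
    exact this ⟨le_rfl, hr.1.le⟩ ⟨hr.1.le, le_rfl⟩ hr.1.le
  intro r hr
  change σ r ≤ _
  obtain ⟨c, hc, hc2⟩ := exists_hasDerivAt_eq_slope (fun x => Real.exp (-(x ^ 2 / 2)) * σ x) _ hr.1
    ((Continuous.continuousOn (by fun_prop)).mul (hσc r hr))
    (fun x hx => (hexp x).mul (hσd x ⟨hx.1, hx.2.trans hr.2⟩))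
  have hcI : c ∈ Ioo 0 R := ⟨hc.1, hc.2.trans hr.2⟩
  have hσc0 : 0 < σ c := div_pos (by linarith [hune c hcI]) (hQpos c)
  have hle : f c / Q c + lam ≤ ε := by
    have h1 : f c / Q c ≤ -lam + ε := by
      rw [div_le_iff₀ (hQpos c)]
      nlinarith [hfle c hcI, hQ1 c]
    linarith
  have hE1 : Real.exp (-(c ^ 2 / 2)) ≤ 1 := Real.exp_le_one_iff.mpr (by nlinarith [sq_nonneg c])
  have hmc : 0 < (m : ℝ) / c * σ c := by
    have := hc.1
    positivity
  have hE0 := Real.exp_pos (-(c ^ 2 / 2))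
  have hkey : Real.exp (-(r ^ 2 / 2)) * σ r ≤ ε * r := by
    have h0 : Real.exp (-(r ^ 2 / 2)) * σ r / r ≤ ε := by
      have : Real.exp (-(r ^ 2 / 2)) * σ r / r =
          Real.exp (-(c ^ 2 / 2)) * (-(m / c * σ c) + (f c / Q c + lam)) := by
        simp only [hσ0, mul_zero, sub_zero] at hc2
        rw [← hc2]
        ring
      rw [this]
      calc _ ≤ Real.exp (-(c ^ 2 / 2)) * ε := by
            apply mul_le_mul_of_nonneg_left _ hE0.le
            linarith
        _ ≤ ε := mul_le_of_le_one_left hε.le hE1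
    exact (div_le_iff₀ hr.1).mp h0
  have hE : Real.exp (-(r ^ 2 / 2)) * Real.exp (r ^ 2 / 2) = 1 := by
    rw [← Real.exp_add]; simp
  calc σ r = (Real.exp (-(r ^ 2 / 2)) * σ r) * Real.exp (r ^ 2 / 2) := by
        linear_combination (-σ r) * hE
    _ ≤ _ := by gcongr

/-- Lemma 3.1: if `λ ≤ 0` and `0 < ε ≤ 1/√π`, the solution of the profile ODE with
`f(0) = -λ + ε`, `f'(0) = 0` has blow-up radius `r_* > √(log(1/(√π ε)))`. -/
theorem blow_up_radius_lower_bound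
    (n : ℕ) (hn : 2 ≤ n) (lam ε : ℝ) (hlam : lam ≤ 0)
    (hε : 0 < ε) (hε' : ε ≤ 1 / Real.sqrt Real.pi)
    (f : ℝ → ℝ) (rstar : ℝ) (hrstar : 0 < rstar)
    (hC1 : ContDiffOn ℝ 1 f (Ico 0 rstar))
    (hC2 : ContDiffOn ℝ 2 f (Ioo 0 rstar))
    (hode : ∀ r ∈ Ioo (0 : ℝ) rstar, ProfileEq n lam f r)
    (hf0 : f 0 = -lam + ε) (hf0' : deriv f 0 = 0)
    (hblow : Tendsto (deriv f) (nhdsWithin rstar (Iio rstar)) atBot) :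
    rstar > Real.sqrt (Real.log (1 / (Real.sqrt Real.pi * ε))) := by
  obtain ⟨m, rfl⟩ : ∃ m, n = m + 1 := ⟨n - 1, by omega⟩
  have hcore := core m (by omega) lam ε rstar hlam hε hrstar f (deriv f)
    (fun r => (r - (m : ℝ) / r) * deriv f r - f r - lam * Real.sqrt (1 + deriv f r ^ 2))
    hC1.continuousOn (fun _ => rfl)
    (fun r hr => ((hC2.differentiableOn (by norm_num)).differentiableAt
      (isOpen_Ioo.mem_nhds hr)).hasDerivAt)
    (fun r hr => by
      have h1 : ContDiffOn ℝ 1 (deriv f) (Ioo 0 rstar) :=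
        hC2.deriv_of_isOpen isOpen_Ioo (by norm_num)
      have h2 := ((h1.differentiableOn (by norm_num)).differentiableAt
        (isOpen_Ioo.mem_nhds hr)).hasDerivAt
      refine h2.congr_deriv ?_
      have h3 := hode r hr
      unfold ProfileEq at h3
      have h4 : (0 : ℝ) < 1 + deriv f r ^ 2 := by positivity
      rw [div_eq_iff h4.ne'] at h3
      rw [h3]
      push_cast
      ring)
    hf0 hf0'
  have hlim : Tendsto (fun r => -deriv f r / Real.sqrt (1 + deriv f r ^ 2))
      (nhdsWithin rstar (Iio rstar)) (nhds 1) := by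
    have h1 : Tendsto (fun r => Real.sqrt (1 / (1 + (deriv f r)⁻¹ ^ 2)))
        (nhdsWithin rstar (Iio rstar)) (nhds 1) := by
      have h2 := tendsto_inv_atBot_zero.comp hblow
      have h3 := (((h2.pow 2).const_add 1).inv₀ (by norm_num)).sqrt
      simpa [Function.comp_def] using h3
    refine h1.congr' ?_
    filter_upwards [hblow.eventually (eventually_lt_atBot 0)] with r hr
    have hp : (0 : ℝ) < 1 + deriv f r ^ 2 := by positivity
    have hq : 0 < Real.sqrt (1 + deriv f r ^ 2) := Real.sqrt_pos.mpr hp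
    have hn : 0 < -deriv f r := by linarith
    rw [Real.sqrt_eq_iff_mul_self_eq_of_pos (by positivity), div_mul_div_comm,
      Real.mul_self_sqrt hp.le]
    have : deriv f r ≠ 0 := hr.ne
    have h5 : deriv f r ^ 2 + 1 ≠ 0 := by positivity
    field_simp
    try ring
  have hlim2 : Tendsto (fun r : ℝ => ε * r * Real.exp (r ^ 2 / 2))
      (nhdsWithin rstar (Iio rstar)) (nhds (ε * rstar * Real.exp (rstar ^ 2 / 2))) := by
    have : Continuous (fun r : ℝ => ε * r * Real.exp (r ^ 2 / 2)) := by fun_prop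
    exact (this.tendsto rstar).mono_left nhdsWithin_le_nhds
  have hone : 1 ≤ ε * rstar * Real.exp (rstar ^ 2 / 2) := by
    refine le_of_tendsto_of_tendsto hlim hlim2 ?_
    filter_upwards [Ioo_mem_nhdsLT hrstar] with r hr
    exact hcore r hr
  have hee : Real.exp (rstar ^ 2 / 2) * Real.exp (rstar ^ 2 / 2) = Real.exp (rstar ^ 2) := by
    rw [← Real.exp_add]; ring_nf
  have hpi : 1 < Real.sqrt Real.pi := by
    rw [Real.lt_sqrt (by norm_num)]
    linarith [Real.pi_gt_three]
  have hr1 : rstar ≤ Real.exp (rstar ^ 2 / 2) := by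
    have := Real.add_one_le_exp (rstar ^ 2 / 2)
    nlinarith [sq_nonneg (rstar - 1)]
  have h1 : 1 ≤ ε * Real.exp (rstar ^ 2) := by
    rw [← hee]
    refine hone.trans ?_
    rw [mul_assoc]
    gcongr
  have hX : 1 / (Real.sqrt Real.pi * ε) < Real.exp (rstar ^ 2) := by
    rw [div_lt_iff₀ (by positivity)]
    nlinarith
  change Real.sqrt _ < rstar
  rw [Real.sqrt_lt' hrstar, Real.log_lt_iff_lt_exp (by positivity)]
  exact hX
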